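/- Let K : ℝ → ℝ be continuous, let a, b be scalar Jacobi fields for K whose Wronskian is nonzero at some point, and let t₁ ≠ t₂. Then there exist nonzero real numbers λ₁, λ₂ with λ₁·a(t₁) = λ₂·a(t₂) and λ₁·b(t₁) = λ₂·b(t₂) if and only if t₁ and t₂ are conjugate for K, i.e., some nontrivial scalar Jacobi field vanishes at both t₁ and t₂. (Scalar form of the characterization of when 𝒞(p₁,ξ¹) = 𝒞(p₂,ξ²) for the canonical map of the 2D geodesic X-ray transform.) -/

import Mathlib

/-- A scalar Jacobi field for the curvature function `K` is a `C²` function `c : ℝ → ℝ`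
satisfying `c'' + K c = 0`. -/
def IsJacobiField (K : ℝ → ℝ) (c : ℝ → ℝ) : Prop :=
  ContDiff ℝ 2 c ∧ ∀ t : ℝ, deriv (deriv c) t + K t * c t = 0

/-!
Two Jacobi fields `a`, `b` have constant Wronskian, so if it is nonzero somewhere they form a basis
of the Jacobi fields and never vanish simultaneously. Hence a nontrivial Jacobi field `p a + q b`
vanishing at `t₁` and `t₂` is a nonzero right kernel vector of the matrix with rows
`(a t₁, b t₁)` and `(a t₂, b t₂)`, while a pair `(λ₁, -λ₂)` realizing the coincidence is a nonzero
left kernel vector; both exist exactly when the determinant vanishes.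
-/

theorem exists_smul_row_eq_smul_row_iff_det_eq_zero {R : Type*} [CommRing R]
    [IsDomain R] {M : Matrix (Fin 2) (Fin 2) R} (hM : ∀ i, M i ≠ 0) :
    (∃ l₁ l₂ : R, l₁ ≠ 0 ∧ l₂ ≠ 0 ∧ l₁ • M 0 = l₂ • M 1) ↔ M.det = 0 := by
  have vecMul_eq (v : Fin 2 → R) : Matrix.vecMul v M = v 0 • M 0 + v 1 • M 1 := by
    rw [Matrix.vecMul_eq_sum, Fin.sum_univ_two]
  rw [← Matrix.exists_vecMul_eq_zero_iff]
  constructor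
  · rintro ⟨l₁, l₂, hl₁, -, h⟩
    refine ⟨![l₁, -l₂], fun hv => hl₁ (congrFun hv 0), ?_⟩
    simp [vecMul_eq, h]
  · rintro ⟨v, hv, h⟩
    rw [vecMul_eq] at h
    have hv_iff : v 0 = 0 ↔ v 1 = 0 := by
      constructor <;> intro h₀ <;> simpa [h₀, hM] using h
    have hv₀ : v 0 ≠ 0 := fun h₀ => hv (funext (Fin.forall_fin_two.2 ⟨h₀, hv_iff.1 h₀⟩))
    refine ⟨v 0, -v 1, hv₀, neg_ne_zero.2 (mt hv_iff.2 hv₀), ?_⟩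
    rw [neg_smul, eq_neg_of_add_eq_zero_left h]

section Wronskian

variable {𝕜 : Type*} [NontriviallyNormedField 𝕜] {f g : 𝕜 → 𝕜} {x : 𝕜}

/-- The Wronskian `f g' - f' g` of two functions; it detects their linear independence. The
derivatives are `deriv`, hence zero wherever a function is not differentiable. -/
noncomputable def wronskian (f g : 𝕜 → 𝕜) (x : 𝕜) : 𝕜 :=
  f x * deriv g x - deriv f x * g x

theorem hasDerivAt_wronskian (hf : DifferentiableAt 𝕜 f x) (hg : DifferentiableAt 𝕜 g x)
    (hf' : DifferentiableAt 𝕜 (deriv f) x) (hg' : DifferentiableAt 𝕜 (deriv g) x) :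
    HasDerivAt (wronskian f g) (f x * deriv (deriv g) x - deriv (deriv f) x * g x) x :=
  ((hf.hasDerivAt.mul hg'.hasDerivAt).sub (hf'.hasDerivAt.mul hg.hasDerivAt)).congr_deriv (by ring)

theorem linearIndependent_pair_of_wronskian_ne_zero (hf : DifferentiableAt 𝕜 f x)
    (hg : DifferentiableAt 𝕜 g x) (hW : wronskian f g x ≠ 0) :
    LinearIndependent 𝕜 ![f, g] := by
  refine LinearIndependent.pair_iff.2 fun p q h => ?_
  have value_eq : p * f x + q * g x = 0 := congrFun h x
  have deriv_eq : p * deriv f x + q * deriv g x = 0 := by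
    have hd := (hf.hasDerivAt.const_smul p).add (hg.hasDerivAt.const_smul q)
    rw [h] at hd
    exact hd.unique (hasDerivAt_const x 0)
  constructor <;> refine (mul_eq_zero.1 ?_).resolve_right hW <;> unfold wronskian
  · linear_combination deriv g x * value_eq - g x * deriv_eq
  · linear_combination f x * deriv_eq - deriv f x * value_eq

-- Cramer's rule: where `wronskian f g x ≠ 0`, this gives the coordinates of `h` relative to `f, g`.
theorem wronskian_mul_eq (f g h : 𝕜 → 𝕜) (x : 𝕜) :
    wronskian f g x * h x = wronskian h g x * f x + wronskian f h x * g x := by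
  unfold wronskian
  ring

theorem vec_ne_zero_of_wronskian_ne_zero (hW : wronskian f g x ≠ 0) : ![f x, g x] ≠ 0 := by
  intro h
  have hf : f x = 0 := congrFun h 0
  have hg : g x = 0 := congrFun h 1
  simp [wronskian, hf, hg] at hW

end Wronskian

namespace IsJacobiField

variable {K a b c : ℝ → ℝ} {t₀ : ℝ}

theorem differentiable (hc : IsJacobiField K c) : Differentiable ℝ c :=
  hc.1.differentiable two_ne_zero

theorem differentiable_deriv (hc : IsJacobiField K c) : Differentiable ℝ (deriv c) :=
  (hc.1.deriv' (n := 1)).differentiable one_ne_zero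

theorem deriv_deriv_eq (hc : IsJacobiField K c) (t : ℝ) : deriv (deriv c) t = -(K t * c t) :=
  eq_neg_of_add_eq_zero_left (hc.2 t)

theorem add (ha : IsJacobiField K a) (hb : IsJacobiField K b) : IsJacobiField K (a + b) := by
  have deriv_add_eq : deriv (a + b) = deriv a + deriv b :=
    funext fun t => deriv_add (ha.differentiable t) (hb.differentiable t)
  refine ⟨ha.1.add hb.1, fun t => ?_⟩
  rw [deriv_add_eq, deriv_add (ha.differentiable_deriv t) (hb.differentiable_deriv t),
    Pi.add_apply]
  linear_combination ha.2 t + hb.2 t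

theorem const_smul (hc : IsJacobiField K c) (p : ℝ) : IsJacobiField K (p • c) := by
  have deriv_smul_eq : deriv (p • c) = p • deriv c :=
    funext fun t => deriv_const_smul p (hc.differentiable t)
  refine ⟨hc.1.const_smul p, fun t => ?_⟩
  rw [deriv_smul_eq, deriv_const_smul p (hc.differentiable_deriv t), Pi.smul_apply, smul_eq_mul,
    smul_eq_mul]
  linear_combination p * hc.2 t

theorem wronskian_eq (ha : IsJacobiField K a) (hb : IsJacobiField K b) (s t : ℝ) :
    wronskian a b s = wronskian a b t := by
  have hasDerivAt_zero (x : ℝ) : HasDerivAt (wronskian a b) 0 x := by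
    refine (hasDerivAt_wronskian (ha.differentiable x) (hb.differentiable x)
      (ha.differentiable_deriv x) (hb.differentiable_deriv x)).congr_deriv ?_
    rw [ha.deriv_deriv_eq, hb.deriv_deriv_eq]
    ring
  exact is_const_of_deriv_eq_zero (fun x => (hasDerivAt_zero x).differentiableAt)
    (fun x => (hasDerivAt_zero x).deriv) s t

theorem iff_exists_smul_add_smul (ha : IsJacobiField K a) (hb : IsJacobiField K b)
    (hW : wronskian a b t₀ ≠ 0) : IsJacobiField K c ↔ ∃ p q : ℝ, c = p • a + q • b := by
  constructor
  · intro hc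
    refine ⟨wronskian c b t₀ / wronskian a b t₀, wronskian a c t₀ / wronskian a b t₀,
      funext fun t => ?_⟩
    have h := wronskian_mul_eq a b c t
    rw [ha.wronskian_eq hb t t₀, hc.wronskian_eq hb t t₀, ha.wronskian_eq hc t t₀] at h
    simp only [Pi.add_apply, Pi.smul_apply, smul_eq_mul]
    field_simp
    linear_combination h
  · rintro ⟨p, q, rfl⟩
    exact (ha.const_smul p).add (hb.const_smul q)

theorem exists_nontrivial_vanishing_iff_det_eq_zero (ha : IsJacobiField K a)
    (hb : IsJacobiField K b) (hW : wronskian a b t₀ ≠ 0) (t₁ t₂ : ℝ) :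
    (∃ c : ℝ → ℝ, IsJacobiField K c ∧ ¬ (∀ t : ℝ, c t = 0) ∧ c t₁ = 0 ∧ c t₂ = 0) ↔
      !![a t₁, b t₁; a t₂, b t₂].det = 0 := by
  have mulVec_eq_zero_iff (v : Fin 2 → ℝ) :
      Matrix.mulVec !![a t₁, b t₁; a t₂, b t₂] v = 0 ↔
        (v 0 • a + v 1 • b) t₁ = 0 ∧ (v 0 • a + v 1 • b) t₂ = 0 := by
    simp [funext_iff, dotProduct, mul_comm]
  rw [← Matrix.exists_mulVec_eq_zero_iff]
  constructor
  · rintro ⟨c, hc, c_ne_zero, hc₁, hc₂⟩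
    obtain ⟨p, q, rfl⟩ := (ha.iff_exists_smul_add_smul hb hW).1 hc
    refine ⟨![p, q], fun hv => c_ne_zero fun t => ?_, (mulVec_eq_zero_iff _).2 ⟨hc₁, hc₂⟩⟩
    have hp : p = 0 := congrFun hv 0
    have hq : q = 0 := congrFun hv 1
    simp [hp, hq]
  · rintro ⟨v, v_ne_zero, hv⟩
    refine ⟨v 0 • a + v 1 • b, (ha.iff_exists_smul_add_smul hb hW).2 ⟨v 0, v 1, rfl⟩,
      fun h => v_ne_zero ?_, (mulVec_eq_zero_iff v).1 hv⟩
    have h_indep := linearIndependent_pair_of_wronskian_ne_zero (ha.differentiable t₀)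
      (hb.differentiable t₀) hW
    exact funext (Fin.forall_fin_two.2 (LinearIndependent.pair_iff.1 h_indep _ _ (funext h)))

end IsJacobiField

/-- Scalar form of Theorem `thm_C`: there exist nonzero `λ₁, λ₂` with
`λ₁ a(t₁) = λ₂ a(t₂)` and `λ₁ b(t₁) = λ₂ b(t₂)` if and only if `t₁` and `t₂`
are conjugate for `K`, i.e., some nontrivial scalar Jacobi field vanishes at both. -/
theorem canonical_map_coincidence_iff_conjugate (K a b : ℝ → ℝ) (hK : Continuous K)
    (ha : IsJacobiField K a) (hb : IsJacobiField K b)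
    (hW : ∃ t₀ : ℝ, a t₀ * deriv b t₀ - deriv a t₀ * b t₀ ≠ 0)
    (t₁ t₂ : ℝ) (ht : t₁ ≠ t₂) :
    (∃ l₁ l₂ : ℝ, l₁ ≠ 0 ∧ l₂ ≠ 0 ∧ l₁ * a t₁ = l₂ * a t₂ ∧ l₁ * b t₁ = l₂ * b t₂) ↔
    (∃ c : ℝ → ℝ, IsJacobiField K c ∧ ¬ (∀ t : ℝ, c t = 0) ∧ c t₁ = 0 ∧ c t₂ = 0) := by
  obtain ⟨t₀, hW⟩ := hW
  have row_ne_zero (t : ℝ) : ![a t, b t] ≠ 0 :=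
    vec_ne_zero_of_wronskian_ne_zero ((ha.wronskian_eq hb t t₀).trans_ne hW)
  rw [ha.exists_nontrivial_vanishing_iff_det_eq_zero hb hW,
    ← exists_smul_row_eq_smul_row_iff_det_eq_zero
      (Fin.forall_fin_two.2 ⟨row_ne_zero t₁, row_ne_zero t₂⟩)]
  simp [funext_iff]
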